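/- Let P : R^n → R be a polynomial that is not constant, and let S = [a₁, b₁] × ⋯ × [aₙ, bₙ] be a compact box with a_j < b_j for each j. Then the oscillatory integral over S vanishes at high frequency: ∫_S cos(t P(x)) dx → 0 and ∫_S sin(t P(x)) dx → 0 as t → ∞; equivalently, ∫_S exp(i t P(x)) dx → 0 as t → ∞. -/

import Mathlib

open MeasureTheory Filter

/-!
Write `f` for the phase, regarded only as a real-analytic function, and `ν` for the restriction of
Lebesgue measure to the box. The integrals are the real and imaginary parts of the characteristic
function of the law of `f` under `ν`, so by the Riemann–Lebesgue lemma it is enough that this law is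
absolutely continuous, i.e. that preimages of null sets under `f` are null. In one variable this
holds because `f'` vanishes only on a discrete set and `f` cannot collapse positive measure near a
point where `f' ≠ 0`. In several variables, restrict `f` to the lines through a fixed point `x₀`: by
Fubini it suffices that `f` is nonconstant on almost every one of them, which holds since the level
set `{f = f x₀}` is null. That in turn follows by slicing along the lines through a point outside
the level set.
-/

section RiemannLebesgue

theorem tendsto_charFun_cocompact_of_absolutelyContinuous
    {V : Type*} [NormedAddCommGroup V] [InnerProductSpace ℝ V] [FiniteDimensional ℝ V]
    [MeasurableSpace V] [BorelSpace V] {ρ : Measure V} [IsFiniteMeasure ρ] (hρ : ρ ≪ volume) :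
    Tendsto (charFun ρ) (cocompact V) (nhds 0) := by
  have hscale : Tendsto (fun t : V ↦ -(2 * Real.pi)⁻¹ • t) (cocompact V) (cocompact V) :=
    (Homeomorph.smulOfNeZero (-(2 * Real.pi)⁻¹) (by simp [Real.pi_ne_zero])
      ).isClosedEmbedding.tendsto_cocompact
  have hdensity := (tendsto_integral_exp_inner_smul_cocompact
    fun v ↦ ((ρ.rnDeriv volume v).toReal : ℂ)).comp hscale
  refine hdensity.congr fun t ↦ ?_
  rw [charFun_eq_fourierIntegral', VectorFourier.fourierIntegral, ← integral_rnDeriv_smul hρ]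
  refine integral_congr_ae (ae_of_all _ fun v ↦ ?_)
  simp [Circle.smul_def, mul_comm]

variable {Ω : Type*} [MeasurableSpace Ω] {ν : Measure Ω} {X : Ω → ℝ}

theorem charFun_map_real (hX : AEMeasurable X ν) (t : ℝ) :
    charFun (ν.map X) t = ∫ ω, Complex.exp ((t * X ω : ℝ) * Complex.I) ∂ν := by
  rw [charFun_apply_real, integral_map hX (by fun_prop)]
  simp

variable [IsFiniteMeasure ν]

theorem integrable_exp_ofReal_mul_I (hX : AEMeasurable X ν) :
    Integrable (fun ω ↦ Complex.exp (X ω * Complex.I)) ν :=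
  .of_bound (by fun_prop) 1 (ae_of_all _ fun ω ↦ (Complex.norm_exp_ofReal_mul_I (X ω)).le)

theorem integral_cos_eq_re_charFun_map (hX : AEMeasurable X ν) (t : ℝ) :
    ∫ ω, Real.cos (t * X ω) ∂ν = (charFun (ν.map X) t).re := by
  simp_rw [charFun_map_real hX, ← Complex.exp_ofReal_mul_I_re]
  exact integral_re (integrable_exp_ofReal_mul_I (hX.const_mul t))

theorem integral_sin_eq_im_charFun_map (hX : AEMeasurable X ν) (t : ℝ) :
    ∫ ω, Real.sin (t * X ω) ∂ν = (charFun (ν.map X) t).im := by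
  simp_rw [charFun_map_real hX, ← Complex.exp_ofReal_mul_I_im]
  exact integral_im (integrable_exp_ofReal_mul_I (hX.const_mul t))

end RiemannLebesgue

section NullPreimages

variable {E : Type*} [NormedAddCommGroup E] [NormedSpace ℝ E] [FiniteDimensional ℝ E]
  [MeasurableSpace E] [BorelSpace E] {μ : Measure E} [μ.IsAddHaarMeasure]

theorem exists_nhds_measure_inter_preimage_eq_zero {f : E → E} {f' : E →L[ℝ] E} {x : E}
    (hf : HasStrictFDerivAt f f' x) (hdet : f'.det ≠ 0) {N : Set E} (hN : μ N = 0) :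
    ∃ u ∈ nhds x, μ (u ∩ f ⁻¹' N) = 0 := by
  obtain ⟨m, hm0, hm⟩ : ∃ m : NNReal, 0 < m ∧ (m : ENNReal) < ENNReal.ofReal |f'.det| :=
    ENNReal.lt_iff_exists_nnreal_btwn.1 (ENNReal.ofReal_pos.2 (abs_pos.2 hdet)) |>.imp
      fun _ ↦ And.imp_left ENNReal.coe_pos.1
  obtain ⟨δ, hδ, hδ0⟩ := ((mul_le_addHaar_image_of_lt_det μ f' hm).and
    self_mem_nhdsWithin).exists
  obtain ⟨u, hu, hfu⟩ := hf.approximates_deriv_on_nhds (Or.inr hδ0)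
  have himage : μ (f '' (u ∩ f ⁻¹' N)) = 0 :=
    measure_mono_null (Set.image_subset_iff.2 Set.inter_subset_right) hN
  have hle : m * μ (u ∩ f ⁻¹' N) ≤ 0 :=
    himage ▸ hδ _ f (hfu.mono_set Set.inter_subset_left)
  exact ⟨u, hu, by simpa [hm0.ne'] using hle⟩

theorem quasiMeasurePreserving_of_ae_hasStrictFDerivAt {f : E → E} (hf : Measurable f)
    {f' : E → E →L[ℝ] E} (hf' : ∀ᵐ x ∂μ, HasStrictFDerivAt f (f' x) x)
    (hdet : ∀ᵐ x ∂μ, (f' x).det ≠ 0) :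
    Measure.QuasiMeasurePreserving f μ μ := by
  refine ⟨hf, Measure.AbsolutelyContinuous.mk fun N hNm hN ↦ ?_⟩
  rw [Measure.map_apply hf hNm]
  set D : Set E := {x | HasStrictFDerivAt f (f' x) x ∧ (f' x).det ≠ 0}
  have hD : μ Dᶜ = 0 := hf'.and hdet
  have hlocal : μ (f ⁻¹' N ∩ D) = 0 := by
    refine measure_null_of_locally_null _ fun x ⟨_, hx, hxdet⟩ ↦ ?_
    obtain ⟨u, hu, hu0⟩ := exists_nhds_measure_inter_preimage_eq_zero hx hxdet hN
    exact ⟨u ∩ (f ⁻¹' N ∩ D), Filter.inter_mem (mem_nhdsWithin_of_mem_nhds hu)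
      self_mem_nhdsWithin, measure_mono_null (by grind) hu0⟩
  exact measure_mono_null (by grind) (measure_union_null hlocal hD)

theorem ae_mem_of_ae_ae_lineMap_mem {A : Set E} (hA : MeasurableSet A) (x₀ : E)
    (h : ∀ᵐ x ∂μ, ∀ᵐ s : ℝ, AffineMap.lineMap x₀ x s ∈ A) : ∀ᵐ x ∂μ, x ∈ A := by
  have hmeas : Measurable fun z : E × ℝ ↦ AffineMap.lineMap x₀ z.1 z.2 := by
    simp only [AffineMap.lineMap_apply_module]
    fun_prop
  have hswap : ∀ᵐ s : ℝ, ∀ᵐ x ∂μ, AffineMap.lineMap x₀ x s ∈ A :=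
    (Measure.ae_ae_comm (p := fun x s ↦ AffineMap.lineMap x₀ x s ∈ A) (hmeas hA)).1 h
  obtain ⟨s, hs, hs0⟩ := (hswap.and (Measure.ae_ne volume (0 : ℝ))).exists
  have hinverse : Measure.QuasiMeasurePreserving (fun y ↦ s⁻¹ • (y - x₀) + x₀) μ μ :=
    (measurePreserving_add_right μ x₀).quasiMeasurePreserving.comp <|
      (Measure.quasiMeasurePreserving_smul μ (inv_ne_zero hs0)).comp
        (measurePreserving_sub_right μ x₀).quasiMeasurePreserving
  filter_upwards [hinverse.ae hs] with y hy
  simpa [AffineMap.lineMap_apply_module', smul_inv_smul₀ hs0] using hy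

end NullPreimages

section Analytic

theorem ae_ne_of_analyticOnNhd_real {F : Type*} [NormedAddCommGroup F] [NormedSpace ℝ F]
    {g : ℝ → F} (hg : AnalyticOnNhd ℝ g Set.univ) {s : ℝ} {c : F} (hs : g s ≠ c) :
    ∀ᵐ r, g r ≠ c := by
  have hcodiscrete := (hg.sub analyticOnNhd_const).preimage_zero_mem_codiscrete (sub_ne_zero.2 hs)
  have hae := ae_restrict_le_codiscreteWithin (μ := volume) MeasurableSet.univ hcodiscrete
  rw [Measure.restrict_univ] at hae
  filter_upwards [hae] with r hr
  exact sub_ne_zero.1 hr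

theorem quasiMeasurePreserving_of_analyticOnNhd_real {g : ℝ → ℝ}
    (hg : AnalyticOnNhd ℝ g Set.univ) {r s : ℝ} (hrs : g r ≠ g s) :
    Measure.QuasiMeasurePreserving g := by
  have hdiff : Differentiable ℝ g := fun x ↦ (hg x trivial).differentiableAt
  obtain ⟨x, hx⟩ : ∃ x, deriv g x ≠ 0 := by
    contrapose! hrs
    exact is_const_of_deriv_eq_zero hdiff hrs r s
  refine quasiMeasurePreserving_of_ae_hasStrictFDerivAt hdiff.continuous.measurable
    (ae_of_all _ fun y ↦ (hg y trivial).hasStrictDerivAt.hasStrictFDerivAt) ?_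
  simpa using ae_ne_of_analyticOnNhd_real hg.deriv hx

variable {E F : Type*} [NormedAddCommGroup E] [NormedSpace ℝ E]
  [NormedAddCommGroup F] [NormedSpace ℝ F]

theorem analyticOnNhd_comp_lineMap {f : E → F} (hf : AnalyticOnNhd ℝ f Set.univ) (x y : E) :
    AnalyticOnNhd ℝ (fun s : ℝ ↦ f (AffineMap.lineMap x y s)) Set.univ := by
  have hline : AnalyticOnNhd ℝ (fun s : ℝ ↦ AffineMap.lineMap x y s) Set.univ := by
    simp only [AffineMap.lineMap_apply_module]
    intro s _
    fun_prop
  exact hf.comp hline (Set.mapsTo_univ _ _)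

variable [FiniteDimensional ℝ E] [MeasurableSpace E] [BorelSpace E]
  {μ : Measure E} [μ.IsAddHaarMeasure]

theorem ae_ne_of_analyticOnNhd {f : E → F} (hf : AnalyticOnNhd ℝ f Set.univ) {x₀ : E} {c : F}
    (hx₀ : f x₀ ≠ c) : ∀ᵐ x ∂μ, f x ≠ c := by
  have hopen : IsOpen {x | f x ≠ c} :=
    isOpen_ne_fun (continuousOn_univ.1 hf.continuousOn) continuous_const
  refine ae_mem_of_ae_ae_lineMap_mem hopen.measurableSet x₀ (ae_of_all _ fun x ↦ ?_)
  exact ae_ne_of_analyticOnNhd_real (analyticOnNhd_comp_lineMap hf x₀ x) (s := 0) (by simpa)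

theorem quasiMeasurePreserving_of_analyticOnNhd {f : E → ℝ} (hf : AnalyticOnNhd ℝ f Set.univ)
    {x₀ x₁ : E} (hne : f x₁ ≠ f x₀) : Measure.QuasiMeasurePreserving f μ volume := by
  have hmeas : Measurable f := (continuousOn_univ.1 hf.continuousOn).measurable
  refine ⟨hmeas, Measure.AbsolutelyContinuous.mk fun N hNm hN ↦ ?_⟩
  rw [Measure.map_apply hmeas hNm, measure_eq_zero_iff_ae_notMem]
  refine ae_mem_of_ae_ae_lineMap_mem (hmeas hNm).compl x₀ ?_
  filter_upwards [ae_ne_of_analyticOnNhd hf hne] with x hx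
  have hline : Measure.QuasiMeasurePreserving fun s : ℝ ↦ f (AffineMap.lineMap x₀ x s) :=
    quasiMeasurePreserving_of_analyticOnNhd_real (analyticOnNhd_comp_lineMap hf x₀ x)
      (r := 1) (s := 0) (by simpa)
  exact hline.ae (measure_eq_zero_iff_ae_notMem.1 hN)

theorem oscillatory_integral_box_decay_general {f : E → ℝ} (hf : AnalyticOnNhd ℝ f Set.univ)
    (hconst : ¬ ∃ c : ℝ, ∀ x, f x = c) {ν : Measure E} [IsFiniteMeasure ν] (hν : ν ≪ μ) :
    Tendsto (fun t : ℝ ↦ ∫ x, Real.cos (t * f x) ∂ν) (cocompact ℝ) (nhds 0) ∧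
    Tendsto (fun t : ℝ ↦ ∫ x, Real.sin (t * f x) ∂ν) (cocompact ℝ) (nhds 0) := by
  obtain ⟨x₁, hx₁⟩ := not_forall.1 (not_exists.1 hconst (f 0))
  have hqmp : Measure.QuasiMeasurePreserving f ν volume :=
    (quasiMeasurePreserving_of_analyticOnNhd hf hx₁).mono_left hν
  have hdecay : Tendsto (charFun (ν.map f)) (cocompact ℝ) (nhds 0) :=
    tendsto_charFun_cocompact_of_absolutelyContinuous hqmp.absolutelyContinuous
  simp only [integral_cos_eq_re_charFun_map hqmp.aemeasurable,
    integral_sin_eq_im_charFun_map hqmp.aemeasurable]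
  exact ⟨(Complex.continuous_re.tendsto 0).comp hdecay,
    (Complex.continuous_im.tendsto 0).comp hdecay⟩

end Analytic

/-- Decay of oscillatory integrals of a nonconstant polynomial phase over a compact box:
`∫_S cos(t P(x)) dx → 0` and `∫_S sin(t P(x)) dx → 0` as `t → ∞`. -/
theorem oscillatory_integral_box_decay
    {n : ℕ} (P : MvPolynomial (Fin n) ℝ)
    (hP : ¬ ∃ c : ℝ, ∀ x : Fin n → ℝ, MvPolynomial.eval x P = c)
    (a b : Fin n → ℝ) (hab : ∀ j, a j < b j) :
    Tendsto (fun t : ℝ =>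
        ∫ x in Set.univ.pi fun j => Set.Icc (a j) (b j),
          Real.cos (t * MvPolynomial.eval x P)) atTop (nhds 0) ∧
    Tendsto (fun t : ℝ =>
        ∫ x in Set.univ.pi fun j => Set.Icc (a j) (b j),
          Real.sin (t * MvPolynomial.eval x P)) atTop (nhds 0) := by
  have : IsFiniteMeasure (volume.restrict (Set.univ.pi fun j ↦ Set.Icc (a j) (b j))) :=
    isFiniteMeasure_restrict.2 (isCompact_univ_pi fun _ ↦ isCompact_Icc).measure_ne_top
  exact (oscillatory_integral_box_decay_general (.eval_mvPolynomial P) hP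
    Measure.restrict_le_self.absolutelyContinuous).imp
    (·.mono_left atTop_le_cocompact) (·.mono_left atTop_le_cocompact)
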